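/- Let P be a complex polynomial of degree n > 2 having no zeros in |z| < 1, let α ∈ ℂ with |α| ≤ 1, and let R ≥ 1. Then max_{|z|=R}|P(z)| ≤ ((R^n + 1)/2)·max_{|z|=1}|P(z)| − |α|·((R^n − 1)/2)·min_{|z|=1}|P(z)| − ((R^n − 1)/n − (R^{n−2} − 1)/(n−2))·|P′(0)|. -/

import Mathlib

open Polynomial Metric

/-- The maximum of `|P(z)|` over the circle `|z| = r`. -/
noncomputable def maxMod (P : Polynomial ℂ) (r : ℝ) : ℝ :=
  ⨆ z : sphere (0 : ℂ) r, ‖P.eval (z : ℂ)‖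

/-- The minimum of `|P(z)|` over the circle `|z| = r`. -/
noncomputable def minMod (P : Polynomial ℂ) (r : ℝ) : ℝ :=
  ⨅ z : sphere (0 : ℂ) r, ‖P.eval (z : ℂ)‖


lemma exists_unit_align (a b : ℂ) : ∃ c : ℂ, ‖c‖ = 1 ∧ ‖a + c * b‖ = ‖a‖ + ‖b‖ := by
  by_cases ha : a = 0
  · exact ⟨1, by simp, by simp [ha]⟩
  by_cases hb : b = 0
  · exact ⟨1, by simp, by simp [hb]⟩
  have ha' : (‖a‖ : ℝ) ≠ 0 := norm_ne_zero_iff.mpr ha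
  have hb' : (‖b‖ : ℝ) ≠ 0 := norm_ne_zero_iff.mpr hb
  have ha'' : ((‖a‖ : ℝ) : ℂ) ≠ 0 := by exact_mod_cast ha'
  refine ⟨a / ‖a‖ * (‖b‖ / b), ?_, ?_⟩
  · simp [ha', hb']
  · have : a + a / ‖a‖ * (‖b‖ / b) * b = (a / ‖a‖) * ((‖a‖ + ‖b‖ : ℝ) : ℂ) := by
      push_cast
      field_simp
    rw [this, norm_mul, norm_div, Complex.norm_real, Complex.norm_real, norm_norm, div_self ha',
      one_mul, Real.norm_of_nonneg (by positivity)]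

lemma re_div_le (z w : ℂ) (hz : ‖z‖ = 1) (hw : 1 ≤ ‖w‖) : (z * (1 / (z - w))).re ≤ 1 / 2 := by
  by_cases h : z - w = 0
  · simp [h]
  have h1 : 0 < Complex.normSq (z - w) := Complex.normSq_pos.mpr h
  have hz2 : Complex.normSq z = 1 := by rw [Complex.normSq_eq_norm_sq, hz]; norm_num
  have hw2 : 1 ≤ Complex.normSq w := by rw [Complex.normSq_eq_norm_sq]; nlinarith
  rw [mul_one_div, Complex.div_re, ← add_div, div_le_iff₀ h1]
  rw [Complex.normSq_apply] at hz2 hw2 ⊢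
  simp only [Complex.sub_re, Complex.sub_im]
  nlinarith

lemma re_multiset (z : ℂ) (hz : ‖z‖ = 1) (s : Multiset ℂ) (hs : ∀ w ∈ s, 1 ≤ ‖w‖) :
    (z * (s.map fun w => 1 / (z - w)).sum).re ≤ s.card / 2 := by
  induction s using Multiset.induction_on with
  | empty => simp
  | cons a s ih =>
    have h1 := ih (fun w hw => hs w (Multiset.mem_cons_of_mem hw))
    have h2 := re_div_le z a hz (hs a (Multiset.mem_cons_self a s))
    rw [Multiset.map_cons, Multiset.sum_cons, mul_add, Complex.add_re, Multiset.card_cons]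
    push_cast
    linarith

lemma lemA (n : ℕ) (F : ℂ[X]) (hF : F.natDegree ≤ n) (hroots : ∀ w : ℂ, F.IsRoot w → 1 ≤ ‖w‖)
    (z : ℂ) (hz : ‖z‖ = 1) :
    ‖F.derivative.eval z‖ ≤ ‖n * F.eval z - z * F.derivative.eval z‖ := by
  by_cases h0 : F.eval z = 0
  · simp [h0, hz]
  have hF0 : F ≠ 0 := by rintro rfl; simp at h0
  have hs := (IsAlgClosed.splits F).eval_derivative_div_eval_of_ne_zero h0
  have hr := re_multiset z hz F.roots (fun w hw => hroots w ((mem_roots hF0).mp hw))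
  rw [← hs] at hr
  have hc : (F.roots.card : ℝ) ≤ n := by exact_mod_cast (F.card_roots').trans hF
  set u := z * (F.derivative.eval z / F.eval z) with hu
  have hur : u.re ≤ n / 2 := by linarith
  have e1 : ‖F.derivative.eval z‖ = ‖u‖ * ‖F.eval z‖ := by
    rw [hu, norm_mul, norm_div, hz, one_mul, div_mul_cancel₀ _ (norm_ne_zero_iff.mpr h0)]
  have e2 : n * F.eval z - z * F.derivative.eval z = (n - u) * F.eval z := by
    rw [hu]; field_simp
  rw [e1, e2, norm_mul ((n : ℂ) - u)]
  refine mul_le_mul_of_nonneg_right ?_ (norm_nonneg _)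
  rw [← sq_le_sq₀ (norm_nonneg _) (norm_nonneg _), ← Complex.normSq_eq_norm_sq,
    ← Complex.normSq_eq_norm_sq, Complex.normSq_apply, Complex.normSq_apply]
  simp only [Complex.sub_re, Complex.sub_im, Complex.natCast_re, Complex.natCast_im]
  nlinarith [(Nat.cast_nonneg n : (0:ℝ) ≤ n)]

lemma maxmod_disc (P : ℂ[X]) (M : ℝ) (hM : ∀ z : ℂ, ‖z‖ = 1 → ‖P.eval z‖ ≤ M) (z : ℂ)
    (hz : ‖z‖ ≤ 1) : ‖P.eval z‖ ≤ M := by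
  refine Complex.norm_le_of_forall_mem_frontier_norm_le (U := ball (0:ℂ) 1) isBounded_ball
    (f := fun z => P.eval z) (P.differentiable.diffContOnCl) ?_ ?_
  · intro w hw
    rw [frontier_ball _ one_ne_zero] at hw
    exact hM w (by simpa using hw)
  · rw [closure_ball _ one_ne_zero]; simpa using hz

lemma minmod_disc (P : ℂ[X]) (hroots : ∀ w : ℂ, P.IsRoot w → 1 ≤ ‖w‖) (m : ℝ) (hm0 : 0 < m)
    (hm : ∀ z : ℂ, ‖z‖ = 1 → m ≤ ‖P.eval z‖) (z : ℂ)
    (hz : ‖z‖ ≤ 1) : m ≤ ‖P.eval z‖ := by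
  have hne : ∀ w : ℂ, ‖w‖ ≤ 1 → P.eval w ≠ 0 := by
    intro w hw h
    have := hm w (le_antisymm hw (hroots w h))
    rw [h, norm_zero] at this
    linarith
  have : ‖(P.eval z)⁻¹‖ ≤ m⁻¹ := by
    refine Complex.norm_le_of_forall_mem_frontier_norm_le (U := ball (0:ℂ) 1) isBounded_ball
      (f := fun z => (P.eval z)⁻¹) ((P.differentiable.diffContOnCl).inv ?_) ?_ ?_
    · intro w hw
      rw [closure_ball _ one_ne_zero] at hw
      exact hne w (by simpa using hw)
    · intro w hw
      rw [frontier_ball _ one_ne_zero] at hw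
      rw [norm_inv]
      exact inv_anti₀ hm0 (hm w (by simpa using hw))
    · rw [closure_ball _ one_ne_zero]; simpa using hz
  rw [norm_inv] at this
  exact (inv_le_inv₀ (norm_pos_iff.mpr (hne z hz)) hm0).mp this

/-- shift of lemA -/
lemma lemA_shift (n : ℕ) (P : ℂ[X]) (hP : P.natDegree ≤ n) (l : ℂ)
    (hl : ∀ w : ℂ, ‖w‖ < 1 → P.eval w ≠ l) (z : ℂ) (hz : ‖z‖ = 1) :
    ‖P.derivative.eval z‖ ≤ ‖n * P.eval z - z * P.derivative.eval z - n * l‖ := by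
  have := lemA n (P - C l) (by simpa using hP) (by
    intro w hw
    by_contra! h
    apply hl w h
    have : P.eval w - l = 0 := by simpa using hw
    linear_combination this) z hz
  simp only [derivative_sub, derivative_C, sub_zero, eval_sub, eval_C] at this
  convert this using 2
  ring

/-- shift along the direction of `A` -/
lemma exists_dir (A : ℂ) (t : ℝ) (n : ℕ) :
    ∃ l : ℂ, ‖l‖ = |t| ∧ ‖A - n * l‖ = |‖A‖ - n * t| := by
  by_cases hA : A = 0
  · exact ⟨t, by simp, by simp [hA, abs_mul]⟩
  have hA' : (‖A‖ : ℝ) ≠ 0 := norm_ne_zero_iff.mpr hA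
  have hA'' : ((‖A‖ : ℝ) : ℂ) ≠ 0 := by exact_mod_cast hA'
  refine ⟨t * (A / ‖A‖), by simp [hA'], ?_⟩
  have : A - n * (t * (A / ‖A‖)) = (A / ‖A‖) * ((‖A‖ - n * t : ℝ) : ℂ) := by
    push_cast; field_simp
  rw [this, norm_mul, norm_div, Complex.norm_real, norm_norm, div_self hA', one_mul,
    Complex.norm_real, Real.norm_eq_abs]

lemma lemB (n : ℕ) (hn : 0 < n) (P : ℂ[X]) (hP : P.natDegree ≤ n) (M : ℝ)
    (hM : ∀ z : ℂ, ‖z‖ = 1 → ‖P.eval z‖ ≤ M) (z : ℂ) (hz : ‖z‖ = 1) :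
    ‖P.derivative.eval z‖ + ‖n * P.eval z - z * P.derivative.eval z‖ ≤ n * M := by
  have hn' : (0:ℝ) < n := by exact_mod_cast hn
  have hM0 : 0 ≤ M := (norm_nonneg _).trans (hM z hz)
  set A := n * P.eval z - z * P.derivative.eval z with hA
  have key : ∀ t : ℝ, M < t → ‖P.derivative.eval z‖ ≤ |‖A‖ - n * t| := by
    intro t ht
    obtain ⟨l, h1, h2⟩ := exists_dir A t n
    rw [← h2]
    refine lemA_shift n P hP l ?_ z hz
    intro w hw h
    have := maxmod_disc P M hM w hw.le
    rw [h, h1, abs_of_pos (by linarith)] at this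
    linarith
  have hAM : ‖A‖ ≤ n * M := by
    by_contra! h
    have := key (‖A‖ / n) (by rw [lt_div_iff₀ hn']; linarith)
    rw [mul_div_cancel₀ _ hn'.ne', sub_self, abs_zero] at this
    have h0 : P.derivative.eval z = 0 := norm_le_zero_iff.mp this
    rw [hA, h0, mul_zero, sub_zero, norm_mul, Complex.norm_natCast] at h
    have := hM z hz
    nlinarith
  refine le_of_forall_pos_le_add fun ε hε => ?_
  have := key (M + ε / n) (by have := div_pos hε hn'; linarith)
  rw [mul_add, mul_div_cancel₀ _ hn'.ne', abs_of_nonpos (by linarith)] at this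
  linarith

lemma lemC (n : ℕ) (hn : 0 < n) (P : ℂ[X]) (hP : P.natDegree ≤ n) 
    (hroots : ∀ w : ℂ, P.IsRoot w → 1 ≤ ‖w‖) (m : ℝ) (hm0 : 0 ≤ m)
    (hm : ∀ z : ℂ, ‖z‖ = 1 → m ≤ ‖P.eval z‖) (z : ℂ) (hz : ‖z‖ = 1) :
    ‖P.derivative.eval z‖ + n * m ≤ ‖n * P.eval z - z * P.derivative.eval z‖ := by
  have hn' : (0:ℝ) < n := by exact_mod_cast hn
  rcases hm0.eq_or_lt with rfl | hm0
  · simpa using lemA n P hP hroots z hz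
  set A := n * P.eval z - z * P.derivative.eval z with hA
  have key : ∀ t : ℝ, 0 ≤ t → t < m → ‖P.derivative.eval z‖ ≤ |‖A‖ - n * t| := by
    intro t ht0 ht
    obtain ⟨l, h1, h2⟩ := exists_dir A t n
    rw [← h2]
    refine lemA_shift n P hP l ?_ z hz
    intro w hw h
    have := minmod_disc P hroots m hm0 hm w hw.le
    rw [h, h1, abs_of_nonneg (by linarith)] at this
    linarith
  have hAM : n * m ≤ ‖A‖ := by
    by_contra! h
    have := key (‖A‖ / n) (by positivity) (by rw [div_lt_iff₀ hn']; linarith)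
    rw [mul_div_cancel₀ _ hn'.ne', sub_self, abs_zero] at this
    have h0 : P.derivative.eval z = 0 := norm_le_zero_iff.mp this
    rw [hA, h0, mul_zero, sub_zero, norm_mul, Complex.norm_natCast] at h
    have := hm z hz
    nlinarith
  by_contra! hcon
  set d := min m ((‖P.derivative.eval z‖ + n * m - ‖A‖) / (2 * n)) with hd
  have hd0 : 0 < d := lt_min hm0 (by apply div_pos <;> linarith)
  have hd1 : d ≤ m := min_le_left _ _
  have hd2 : d * (2 * n) ≤ ‖P.derivative.eval z‖ + n * m - ‖A‖ := by
    rw [← le_div_iff₀ (by positivity)]; exact min_le_right _ _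
  have := key (m - d) (by linarith) (by linarith)
  rw [abs_of_nonneg (by nlinarith)] at this
  nlinarith

lemma erdosLax (n : ℕ) (hn : 0 < n) (P : ℂ[X]) (hP : P.natDegree ≤ n) 
    (hroots : ∀ w : ℂ, P.IsRoot w → 1 ≤ ‖w‖) (M m : ℝ) (hm0 : 0 ≤ m)
    (hM : ∀ z : ℂ, ‖z‖ = 1 → ‖P.eval z‖ ≤ M)
    (hm : ∀ z : ℂ, ‖z‖ = 1 → m ≤ ‖P.eval z‖) (z : ℂ) (hz : ‖z‖ = 1) :
    ‖P.derivative.eval z‖ ≤ n / 2 * (M - m) := by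
  have h1 := lemB n hn P hP M hM z hz
  have h2 := lemC n hn P hP hroots m hm0 hm z hz
  linarith

lemma blaschke_id (r : ℝ) (z : ℂ) :
    ‖1 - r * z‖ ^ 2 - ‖z - r‖ ^ 2 = (1 - r ^ 2) * (1 - ‖z‖ ^ 2) := by
  simp only [← Complex.normSq_eq_norm_sq, Complex.normSq_apply]
  simp
  ring

/-- Quadrature core. -/
lemma quad (k : ℕ) (hk : 2 ≤ k) (q : ℂ[X]) (hq : q.natDegree ≤ k) (B : ℝ)
    (hB : ∀ z : ℂ, ‖z‖ = 1 → ‖q.eval z‖ ≤ B) (r : ℝ) (hr0 : 0 < r) (hr1 : r < 1)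
    (c : ℂ) (hc : ‖c‖ = 1) :
    ‖q.eval (r : ℂ) + c * ((1 - r ^ 2 : ℝ) * q.coeff k)‖ ≤ B := by
  obtain ⟨j, rfl⟩ : ∃ j, k = j + 2 := ⟨k - 2, by omega⟩
  have hr2 : 0 < 1 - r ^ 2 := by nlinarith
  have hc0 : c ≠ 0 := by rintro rfl; simp at hc
  set w : ℂ[X] := X ^ (j + 1) * (X - C (r : ℂ)) - C c * (1 - C (r : ℂ) * X) with hw
  have hwe : ∀ z, w.eval z = z ^ (j + 1) * (z - r) - c * (1 - r * z) := by
    intro z; simp [hw]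
  have hwd : ∀ z, w.derivative.eval z = (j + 1) * z ^ j * (z - r) + z ^ (j + 1) + c * r := by
    intro z; simp [hw]
  have hmon1 : (X ^ (j + 1) * (X - C (r : ℂ)) : ℂ[X]).Monic := (monic_X_pow _).mul (monic_X_sub_C _)
  have hdeg1 : (X ^ (j + 1) * (X - C (r : ℂ)) : ℂ[X]).natDegree = j + 2 := by
    rw [(monic_X_pow _).natDegree_mul (monic_X_sub_C _)]; simp
  have hdeg2 : (C c * (1 - C (r : ℂ) * X) : ℂ[X]).natDegree ≤ 1 := by
    compute_degree
  have hlt : (C c * (1 - C (r : ℂ) * X) : ℂ[X]).degree < (X ^ (j + 1) * (X - C (r : ℂ)) : ℂ[X]).degree := by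
    apply degree_lt_degree; omega
  have hwm : w.Monic := hmon1.sub_of_left hlt
  have hwdeg : w.natDegree = j + 2 := by
    rw [hw, natDegree_sub_eq_left_of_natDegree_lt (by omega), hdeg1]
  -- roots are on the unit circle
  have hroot : ∀ z, w.eval z = 0 → ‖z‖ = 1 := by
    intro z hz
    rw [hwe, sub_eq_zero] at hz
    have h1 := congrArg norm hz
    rw [norm_mul, norm_mul, norm_pow, hc, one_mul] at h1
    have h2 := blaschke_id r z
    rw [← h1] at h2
    rcases lt_trichotomy ‖z‖ 1 with h | h | h
    · exfalso
      have h3 : ‖z‖ ^ (j + 1) ≤ 1 := pow_le_one₀ (norm_nonneg _) h.le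
      have h4 : (‖z‖ ^ (j + 1) * ‖z - r‖) ^ 2 ≤ ‖z - r‖ ^ 2 := by
        gcongr
        exact mul_le_of_le_one_left (norm_nonneg _) h3
      have : 0 < (1 - r ^ 2) * (1 - ‖z‖ ^ 2) := mul_pos hr2 (by nlinarith [norm_nonneg z])
      linarith
    · exact h
    · exfalso
      have h3 : 1 ≤ ‖z‖ ^ (j + 1) := one_le_pow₀ h.le
      have h4 : ‖z - r‖ ^ 2 ≤ (‖z‖ ^ (j + 1) * ‖z - r‖) ^ 2 := by
        gcongr
        exact le_mul_of_one_le_left (norm_nonneg _) h3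
      have : 0 < (1 - r ^ 2) * (‖z‖ ^ 2 - 1) := mul_pos hr2 (by nlinarith [norm_nonneg z])
      linarith
  set D : ℂ → ℝ := fun z => (j + 1) * ‖z - r‖ ^ 2 + (1 - r ^ 2) with hD
  have hDpos : ∀ z, 0 < D z := by intro z; simp only [hD]; positivity
  have hder : ∀ z, w.eval z = 0 → (z - r) * w.derivative.eval z = c * (D z : ℂ) := by
    intro z hz
    have hz1 := hroot z hz
    have hz0 : z ≠ 0 := by rintro rfl; simp at hz1
    have hN : (1 - r * z) * (z - r) = z * ((‖z - r‖ ^ 2 : ℝ) : ℂ) := by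
      have hzz : z * (starRingEnd ℂ) z = 1 := by
        rw [Complex.mul_conj, Complex.normSq_eq_norm_sq, hz1]; norm_num
      rw [← Complex.normSq_eq_norm_sq, ← Complex.mul_conj]
      simp only [map_sub, Complex.conj_ofReal]
      linear_combination (-(z - r)) * hzz
    rw [hwe] at hz
    rw [hwd]
    apply mul_left_cancel₀ hz0
    have : ((D z : ℝ) : ℂ) = (j + 1) * ((‖z - r‖ ^ 2 : ℝ) : ℂ) + (1 - r ^ 2) := by
      simp only [hD]; push_cast; ring
    rw [this]
    have e : z * (c * ((j + 1) * ((‖z - r‖ ^ 2 : ℝ) : ℂ) + (1 - r ^ 2)))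
      = c * (j + 1) * (z * ((‖z - r‖ ^ 2 : ℝ) : ℂ)) + c * z * (1 - r ^ 2) := by ring
    rw [e, ← hN]
    linear_combination ((j + 1) * (z - r) + z) * hz
  have hder0 : ∀ z, w.eval z = 0 → w.derivative.eval z ≠ 0 := by
    intro z hz h
    have := hder z hz
    rw [h, mul_zero] at this
    have h2 : (D z : ℂ) ≠ 0 := by exact_mod_cast (hDpos z).ne'
    exact mul_ne_zero hc0 h2 this.symm
  have hnodup : w.roots.Nodup := by
    rw [Multiset.nodup_iff_count_le_one]
    intro z
    rw [count_roots]
    by_contra! h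
    have := (one_lt_rootMultiplicity_iff_isRoot hwm.ne_zero).mp h
    exact hder0 z this.1 this.2
  classical
  set s := w.roots.toFinset with hs
  have hcard : s.card = j + 2 := by
    rw [hs, Multiset.toFinset_card_of_nodup hnodup, ← (IsAlgClosed.splits w).natDegree_eq_card_roots, hwdeg]
  have hmem : ∀ z ∈ s, w.eval z = 0 := by
    intro z hz
    rw [hs, Multiset.mem_toFinset, mem_roots hwm.ne_zero] at hz
    exact hz
  have hnodal : Lagrange.nodal s id = w := by
    have := (IsAlgClosed.splits w).eq_prod_roots_of_monic hwm
    rw [this, Lagrange.nodal_eq, Finset.prod, hs, Multiset.toFinset_val, hnodup.dedup]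
    simp
  have hinj : Set.InjOn (id : ℂ → ℂ) s := Set.injOn_id _
  have hrs : ∀ z ∈ s, (r : ℂ) ≠ id z := by
    rintro z hz rfl
    have := hroot _ (hmem _ hz)
    simp [abs_of_pos hr0] at this
    linarith
  have hbasis : ∀ z ∈ s, (Lagrange.basis s id z).eval (r : ℂ) = (((1 - r ^ 2) / D z : ℝ) : ℂ) := by
    intro z hz
    rw [Lagrange.eval_basis_not_at_node hz (hrs z hz), Lagrange.nodalWeight_eq_eval_derivative_nodal hz,
      hnodal, hwe]
    have h1 := hder z (hmem z hz)
    have h2 := hder0 z (hmem z hz)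
    have h3 : (D z : ℂ) ≠ 0 := by exact_mod_cast (hDpos z).ne'
    have h4 : (r : ℂ) - z ≠ 0 := sub_ne_zero.mpr (hrs z hz)
    simp only [id]
    push_cast
    field_simp
    linear_combination (1 - r ^ 2 : ℂ) * h1
  have hsum : ∑ z ∈ s, (1 - r ^ 2) / D z = 1 := by
    have h1 := Lagrange.sum_basis hinj (by rw [← Finset.card_pos]; omega)
    have h2 := congrArg (eval (r : ℂ)) h1
    rw [eval_finsetSum, Finset.sum_congr rfl hbasis, eval_one] at h2
    exact_mod_cast h2
  -- interpolation
  have hg : (q - C (q.coeff (j + 2)) * w).degree < s.card := by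
    rw [hcard, degree_lt_iff_coeff_zero]
    intro i hi
    rcases hi.eq_or_lt with rfl | hi
    · have : w.coeff (j + 2) = 1 := by rw [← hwdeg]; exact hwm
      simp [this]
    · rw [coeff_sub, coeff_C_mul, coeff_eq_zero_of_natDegree_lt (by omega),
        coeff_eq_zero_of_natDegree_lt (p := w) (by omega)]
      simp
  have hint := Lagrange.eq_interpolate hinj hg
  have h2 := congrArg (eval (r : ℂ)) hint
  rw [Lagrange.interpolate_apply, eval_finsetSum] at h2
  have h3 : q.eval (r : ℂ) + c * ((1 - r ^ 2 : ℝ) * q.coeff (j + 2)) =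
      ∑ z ∈ s, q.eval z * (((1 - r ^ 2) / D z : ℝ) : ℂ) := by
    have : (q - C (q.coeff (j + 2)) * w).eval (r : ℂ) = 
        q.eval (r : ℂ) + c * ((1 - r ^ 2 : ℝ) * q.coeff (j + 2)) := by
      simp only [eval_sub, eval_mul, eval_C, hwe]
      push_cast; ring
    rw [← this, h2]
    refine Finset.sum_congr rfl fun z hz => ?_
    rw [eval_mul, hbasis z hz]
    simp [hmem z hz]
  rw [h3]
  calc _ ≤ ∑ z ∈ s, ‖q.eval z * (((1 - r ^ 2) / D z : ℝ) : ℂ)‖ := norm_sum_le _ _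
    _ ≤ ∑ z ∈ s, B * ((1 - r ^ 2) / D z) := by
      refine Finset.sum_le_sum fun z hz => ?_
      have hp : 0 ≤ (1 - r ^ 2) / D z := (div_pos hr2 (hDpos z)).le
      rw [norm_mul, Complex.norm_real, Real.norm_of_nonneg hp]
      exact mul_le_mul_of_nonneg_right (hB z (hroot z (hmem z hz))) hp
    _ = B := by rw [← Finset.mul_sum, hsum, mul_one]

lemma frr_aux (k : ℕ) (hk : 2 ≤ k) (q : ℂ[X]) (hq : q.natDegree ≤ k) (B : ℝ)
    (hB : ∀ z : ℂ, ‖z‖ = 1 → ‖q.eval z‖ ≤ B) (r : ℝ) (hr0 : 0 < r) (hr1 : r < 1) :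
    ‖q.eval (r : ℂ)‖ + (1 - r ^ 2) * ‖q.coeff k‖ ≤ B := by
  obtain ⟨c, hc, h⟩ := exists_unit_align (q.eval (r : ℂ)) ((1 - r ^ 2 : ℝ) * q.coeff k)
  have := quad k hk q hq B hB r hr0 hr1 c hc
  rwa [h, norm_mul, Complex.norm_real, Real.norm_of_nonneg (by nlinarith)] at this

lemma eval_reflect_eq (k : ℕ) (Q : ℂ[X]) (hQ : Q.natDegree ≤ k) (x : ℂ) (hx : x ≠ 0) :
    (Q.reflect k).eval x⁻¹ * x ^ k = Q.eval x := by
  let _ := invertibleOfNonzero hx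
  have := eval₂_reflect_mul_pow (RingHom.id ℂ) x k Q hQ
  rwa [invOf_eq_inv] at this

/-- Frappier–Rahman–Ruscheweyh -/
lemma frr (k : ℕ) (hk : 2 ≤ k) (Q : ℂ[X]) (hQ : Q.natDegree ≤ k) (B : ℝ)
    (hB : ∀ z : ℂ, ‖z‖ = 1 → ‖Q.eval z‖ ≤ B) (t : ℝ) (ht : 1 ≤ t) (u : ℂ) (hu : ‖u‖ = 1) :
    ‖Q.eval (t * u)‖ ≤ t ^ k * B - (t ^ k - t ^ (k - 2)) * ‖Q.eval 0‖ := by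
  rcases ht.eq_or_lt with rfl | ht
  · simpa using hB u hu
  have hu0 : u ≠ 0 := by rintro rfl; simp at hu
  have ht0 : (t : ℂ) ≠ 0 := by exact_mod_cast (by linarith : t ≠ 0)
  set S := Q.comp (C u * X) with hS
  have hSe : ∀ z, S.eval z = Q.eval (u * z) := by intro z; simp [hS]
  have hSd : S.natDegree ≤ k := by
    refine natDegree_comp_le.trans ?_
    have : (C u * X).natDegree ≤ 1 := by compute_degree
    nlinarith
  have hq := frr_aux k hk (S.reflect k) ((natDegree_reflect_le ..).trans (by simp [hSd])) B (by
    intro z hz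
    have hz0 : z ≠ 0 := by rintro rfl; simp at hz
    have h1 := congrArg norm (eval_reflect_eq k S hSd z⁻¹ (inv_ne_zero hz0))
    rw [inv_inv, norm_mul, norm_pow, norm_inv, hz, inv_one, one_pow, mul_one, hSe] at h1
    rw [h1]
    exact hB _ (by simp [hu, hz])) t⁻¹ (by positivity) (inv_lt_one_of_one_lt₀ ht)
  have h1 := congrArg norm (eval_reflect_eq k S hSd t ht0)
  rw [norm_mul, norm_pow, Complex.norm_real, Real.norm_of_nonneg (by linarith), hSe, mul_comm u] at h1
  have h2 : (S.reflect k).coeff k = Q.eval 0 := by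
    rw [coeff_reflect, revAt_le le_rfl, Nat.sub_self, coeff_zero_eq_eval_zero, hSe, mul_zero]
  rw [h2] at hq
  push_cast at hq
  rw [← h1]
  have h3 : t ^ k * (1 - t⁻¹ ^ 2) = t ^ k - t ^ (k - 2) := by
    obtain ⟨j, rfl⟩ : ∃ j, k = j + 2 := ⟨k - 2, by omega⟩
    have : t ≠ 0 := by linarith
    simp only [Nat.add_sub_cancel]
    field_simp
    ring
  rw [← h3]
  have h4 : 0 ≤ t ^ k := by positivity
  nlinarith [mul_le_mul_of_nonneg_left hq h4]

theorem stmt_7 (n : ℕ) (hn : 2 < n) (P : Polynomial ℂ) (hdeg : P.natDegree = n)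
    (hroots : ∀ w : ℂ, P.IsRoot w → 1 ≤ ‖w‖)
    (α : ℂ) (hα : ‖α‖ ≤ 1) (R : ℝ) (hR : 1 ≤ R) :
    maxMod P R ≤
      ((R ^ n + 1) / 2) * maxMod P 1 -
        ‖α‖ * ((R ^ n - 1) / 2) * minMod P 1 -
        ((R ^ n - 1) / (n : ℝ) - (R ^ (n - 2) - 1) / ((n : ℝ) - 2)) *
          ‖(Polynomial.derivative P).eval 0‖ := by
  have hbdd : ∀ r : ℝ, BddAbove (Set.range fun z : sphere (0 : ℂ) r => ‖P.eval (z : ℂ)‖) := by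
    intro r
    refine (isCompact_range ?_).bddAbove
    exact (P.continuous.comp continuous_subtype_val).norm
  have hM : ∀ z : ℂ, ‖z‖ = 1 → ‖P.eval z‖ ≤ maxMod P 1 := by
    intro z hz
    exact le_ciSup (hbdd 1) (⟨z, by simpa using hz⟩ : sphere (0 : ℂ) 1)
  have hm : ∀ z : ℂ, ‖z‖ = 1 → minMod P 1 ≤ ‖P.eval z‖ := by
    intro z hz
    exact ciInf_le (f := fun z : sphere (0 : ℂ) 1 => ‖P.eval (z : ℂ)‖)
      ⟨0, by rintro _ ⟨x, rfl⟩; exact norm_nonneg _⟩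
      (⟨z, by simpa using hz⟩ : sphere (0 : ℂ) 1)
  have hm0 : 0 ≤ minMod P 1 := Real.iInf_nonneg fun _ => norm_nonneg _
  set M := maxMod P 1
  set m := minMod P 1
  set p := ‖(Polynomial.derivative P).eval 0‖ with hp
  have hn2 : (0 : ℝ) < (n : ℝ) - 2 := by
    have : (2 : ℝ) < n := by exact_mod_cast hn
    linarith
  have hn0 : (0 : ℝ) < n := by linarith
  have hEL := erdosLax n (by omega) P hdeg.le hroots M m hm0 hM hm
  have hdd : (derivative P).natDegree ≤ n - 1 := hdeg ▸ natDegree_derivative_le P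
  have hmain : ∀ u : ℂ, ‖u‖ = 1 → ‖P.eval (R * u)‖ ≤ ((R ^ n + 1) / 2) * M -
      ((R ^ n - 1) / 2) * m - ((R ^ n - 1) / (n : ℝ) - (R ^ (n - 2) - 1) / ((n : ℝ) - 2)) * p := by
    intro u hu
    have hder : ∀ t : ℝ, HasDerivAt (fun t : ℝ => P.eval ((t : ℂ) * u))
        ((derivative P).eval (t * u) * u) t := by
      intro t
      have h1 : HasDerivAt (fun t : ℝ => (t : ℂ) * u) u t := by
        simpa using (Complex.ofRealCLM.hasDerivAt (x := t)).mul_const u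
      exact HasDerivAt.comp (h₂ := fun z => P.eval z) t (P.hasDerivAt _) h1
    refine image_norm_le_of_norm_deriv_right_le_deriv_boundary (a := 1) (b := R)
      (f := fun t : ℝ => P.eval ((t : ℂ) * u))
      (f' := fun t : ℝ => (derivative P).eval (t * u) * u)
      (B := fun t => ((t ^ n + 1) / 2) * M -
      ((t ^ n - 1) / 2) * m - ((t ^ n - 1) / (n : ℝ) - (t ^ (n - 2) - 1) / ((n : ℝ) - 2)) * p)
      (B' := fun t => t ^ (n - 1) * (n / 2 * (M - m)) - (t ^ (n - 1) - t ^ (n - 1 - 2)) * p)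
      ?_ ?_ ?_ ?_ ?_ ⟨hR, le_rfl⟩
    · exact fun t _ => (hder t).continuousAt.continuousWithinAt
    · exact fun t _ => (hder t).hasDerivWithinAt
    · simpa using hM u hu
    · intro t
      have e1 := hasDerivAt_pow n t
      have e2 := hasDerivAt_pow (n - 2) t
      have e := ((((e1.add_const 1).div_const 2).mul_const M).sub
        (((e1.sub_const 1).div_const 2).mul_const m)).sub
        ((((e1.sub_const 1).div_const (n : ℝ)).sub
          ((e2.sub_const 1).div_const ((n : ℝ) - 2))).mul_const p)
      refine e.congr_deriv ?_
      rw [show n - 1 - 2 = n - 2 - 1 by omega, Nat.cast_sub hn.le]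
      have := hn2.ne'
      push_cast
      field_simp
    · intro t ht
      rw [norm_mul, hu, mul_one]
      exact frr (n - 1) (by omega) (derivative P) hdd _ hEL t ht.1 u hu
  have hRn : 1 ≤ R ^ n := one_le_pow₀ hR
  have hα2 : ‖α‖ * ((R ^ n - 1) / 2) * m ≤ ((R ^ n - 1) / 2) * m := by
    rw [mul_assoc]
    exact mul_le_of_le_one_left (mul_nonneg (by linarith) hm0) hα
  have : Nonempty (sphere (0 : ℂ) R) :=
    ⟨⟨(R : ℂ), by simp; linarith⟩⟩
  refine ciSup_le fun z => ?_
  have hR0 : (R : ℂ) ≠ 0 := by exact_mod_cast (by linarith : R ≠ 0)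
  have hzR : ‖(z : ℂ)‖ = R := by simpa using z.2
  have hz := hmain ((z : ℂ) / R) (by
    rw [norm_div, hzR, Complex.norm_real, Real.norm_of_nonneg (by linarith),
      div_self (by linarith)])
  rw [mul_div_cancel₀ _ hR0] at hz
  linarith
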